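/- Let K be a finite token alphabet, V = K ⊕ {m} with a distinguished mask symbol m, L ≥ 1, T ≥ 1, and x ∈ K^L. Let a_0 ≥ a_1 ≥ … ≥ a_T = 0 be a noise schedule with a_0 ≤ 1 and a_i < 1 for i ≥ 1, and set β_i := (a_{i−1} − a_i)/(1 − a_i) ∈ [0,1] for i = 1, …, T. Let q be the joint law on (V^L)^{T+1} of the backward chain (Z_T, …, Z_0) with Z_T the constant all-mask sequence and, given Z_i, the coordinates of Z_{i−1} independent with: Z_{i−1}^l = Z_i^l if Z_i^l ≠ m, and otherwise Z_{i−1}^l = x^l with probability β_i and Z_{i−1}^l = m with probability 1 − β_i. Let x_φ : V^L → (probability vectors on K)^L be an adapted probability table with x_φ(z)^l(x^l) > 0 for all z, l; let w : V^L → ℝ with 0 < w(z) ≤ 1 (the measurement likelihood weights q(y | x_φ(z))); and let p_dec : V^L → ℝ be nonnegative with p_dec(z_0) > 0 whenever q assigns positive probability to a path ending at z_0 (the decoder probability p_φ(x | z_0)). Define the tilted reverse process on paths: terminal point mass at the all-mask sequence, per-step weights p_φ(z_{i−1} | z_i, y) := Q_{φ,i}(z_{i−1} | z_i) · w(z_i)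 where Q_{φ,i} is the product kernel that fixes revealed coordinates and at masked coordinates l places mass 1−β_i on m and β_i·x_φ(z_i)^l(k) on k ∈ K, and define p_φ(x | y) := Σ over paths of the product of the terminal mass, the per-step weights, and p_dec(z_0). Then −log p_φ(x | y) ≤ E_q[−log p_dec(Z_0)] + Σ_{i=1}^{T} E_q[ β_i · Σ_{l=1}^{L} (−log x_φ(Z_i)^l(x^l)) · 1{Z_i^l = m} ] − Σ_{i=1}^{T} E_q[ log w(Z_i) ]. -/

import Mathlib

/-!
Gibbs' inequality bounds `-log` of the total mass of the tilted path weights by their relative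
entropy from the law of the backward chain. By the chain rule, this relative entropy is a sum over
the steps of the expected relative entropies of the kernels. The kernels are products over
positions, so each of these splits further into one term per position: zero at a revealed
position, and `β` times a relative entropy of token distributions at a masked one. The backward
chain always reveals the true token `x l`, and the relative entropy of the point mass at `x l`
with respect to `xφ z l` is `-log (xφ z l (x l))`.
-/

open Finset

section RelEntropy

variable {α : Type*} [Fintype α] {p r : α → ℝ}

/-- The relative entropy (Kullback–Leibler divergence) of weights `p` with respect to weights `r`
on a finite type; `r` need not be normalized. Since `x / 0 = 0` and `log 0 = 0`, the value is
meaningful only if `r` is nonzero wherever `p` is. -/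
noncomputable def relEntropy (p r : α → ℝ) : ℝ :=
  ∑ i, p i * Real.log (p i / r i)

theorem neg_log_sum_le_relEntropy (hp : ∀ i, 0 ≤ p i) (hp_sum : ∑ i, p i = 1)
    (hr : ∀ i, 0 ≤ r i) (hpr : ∀ i, p i ≠ 0 → r i ≠ 0) :
    -Real.log (∑ i, r i) ≤ relEntropy p r := by
  obtain ⟨k, -, hk⟩ := exists_ne_zero_of_sum_ne_zero (hp_sum.trans_ne one_ne_zero)
  set M := ∑ i, r i
  have hM : 0 < M :=
    sum_pos' (fun i _ => hr i) ⟨k, mem_univ k, (hr k).lt_of_ne' (hpr k hk)⟩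
  have term_le (i : α) : p i - r i / M ≤ p i * Real.log (p i / r i) + p i * Real.log M := by
    rcases (hp i).eq_or_lt with hi | hi
    · simpa [← hi] using div_nonneg (hr i) hM.le
    · have hri : 0 < r i := (hr i).lt_of_ne' (hpr i hi.ne')
      calc p i - r i / M = p i * (1 - (p i / r i * M)⁻¹) := by field_simp
        _ ≤ p i * Real.log (p i / r i * M) := by
          gcongr
          exact Real.one_sub_inv_le_log_of_pos (by positivity)
        _ = p i * Real.log (p i / r i) + p i * Real.log M := by
          rw [Real.log_mul (by positivity) hM.ne', mul_add]
  have sum_le := sum_le_sum fun i (_ : i ∈ univ) => term_le i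
  rw [sum_sub_distrib, sum_add_distrib, ← sum_div, ← sum_mul, hp_sum, div_self hM.ne', one_mul,
    sub_self] at sum_le
  exact neg_le_iff_add_nonneg.2 sum_le

theorem relEntropy_mul_const (hp_sum : ∑ i, p i = 1) (hpr : ∀ i, p i ≠ 0 → r i ≠ 0)
    {c : ℝ} (hc : c ≠ 0) :
    relEntropy p (fun i => r i * c) = relEntropy p r - Real.log c := by
  have term_eq (i : α) : p i * Real.log (p i / (r i * c))
      = p i * Real.log (p i / r i) - p i * Real.log c := by
    by_cases hi : p i = 0
    · simp [hi]
    · rw [← div_div, Real.log_div (div_ne_zero hi (hpr i hi)) hc, mul_sub]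
  simp only [relEntropy, term_eq, sum_sub_distrib, ← sum_mul, hp_sum, one_mul]

theorem relEntropy_single_one [DecidableEq α] (a : α) (r : α → ℝ) :
    relEntropy (Pi.single a 1) r = -Real.log (r a) := by
  simp [relEntropy, Pi.single_apply]

end RelEntropy

section Pi

variable {ι : Type*} [Fintype ι] [DecidableEq ι] {α : ι → Type*} [∀ i, Fintype (α i)]

theorem sum_prod_apply_mul_apply {R : Type*} [CommSemiring R] {p : ∀ i, α i → R}
    (hp : ∀ i, ∑ v, p i v = 1) (i : ι) (f : α i → R) :
    ∑ z : ∀ i, α i, (∏ j, p j (z j)) * f (z i) = ∑ v, p i v * f v := by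
  have prod_mulSingle (z : ∀ i, α i) : ∏ j, Pi.mulSingle (M := fun j => α j → R) i f j (z j)
      = f (z i) := by
    rw [prod_eq_single i (fun j _ hj => by simp [hj]) (by simp), Pi.mulSingle_eq_same]
  calc ∑ z : ∀ i, α i, (∏ j, p j (z j)) * f (z i)
      = ∏ j, ∑ v, p j v * Pi.mulSingle (M := fun j => α j → R) i f j v := by
        simp only [Fintype.prod_sum, prod_mul_distrib, prod_mulSingle]
    _ = ∑ v, p i v * f v := by
        rw [prod_eq_single i (fun j _ hj => by simp [hj, hp]) (by simp), Pi.mulSingle_eq_same]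

theorem relEntropy_pi {p r : ∀ i, α i → ℝ} (hp : ∀ i, ∑ v, p i v = 1)
    (hpr : ∀ i v, p i v ≠ 0 → r i v ≠ 0) :
    relEntropy (fun z : ∀ i, α i => ∏ i, p i (z i)) (fun z => ∏ i, r i (z i))
      = ∑ i, relEntropy (p i) (r i) := by
  have term_eq (z : ∀ i, α i) :
      (∏ i, p i (z i)) * Real.log ((∏ i, p i (z i)) / ∏ i, r i (z i))
        = ∑ i, (∏ j, p j (z j)) * Real.log (p i (z i) / r i (z i)) := by
    by_cases hz : ∏ i, p i (z i) = 0
    · simp [hz]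
    · have hpz := fun i => prod_ne_zero_iff.1 hz i (mem_univ i)
      rw [← mul_sum, ← prod_div_distrib,
        Real.log_prod fun i _ => div_ne_zero (hpz i) (hpr i _ (hpz i))]
  simp only [relEntropy, term_eq]
  rw [sum_comm]
  exact sum_congr rfl fun i _ =>
    sum_prod_apply_mul_apply hp i fun v => Real.log (p i v / r i v)

end Pi

section PathWeight

variable {S R : Type*} {T : ℕ}

/-- The weight of a path `ω` of the time-reversed chain that starts at `ω T` with weight `init` and
moves from `ω (j + 1)` to `ω j` with weight `Q j`. -/
def pathWeight [CommSemiring R] (init : S → R) (Q : Fin T → S → S → R) (ω : Fin (T + 1) → S) : R :=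
  init (ω (Fin.last T)) * ∏ j, Q j (ω j.succ) (ω j.castSucc)

theorem pathWeight_cons [CommSemiring R] (init : S → R) (Q : Fin (T + 1) → S → S → R)
    (z : S) (ω : Fin (T + 1) → S) :
    pathWeight init Q (Fin.cons z ω : Fin (T + 2) → S)
      = pathWeight init (fun j => Q j.succ) ω * Q 0 (ω 0) z := by
  simp only [pathWeight, Fin.prod_univ_succ (n := T), ← Fin.succ_last, ← Fin.succ_castSucc,
    Fin.castSucc_zero, Fin.cons_succ, Fin.cons_zero]
  ring

theorem pathWeight_nonneg [CommSemiring R] [PartialOrder R] [IsOrderedRing R] {init : S → R}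
    {Q : Fin T → S → S → R} (hinit : 0 ≤ init) (hQ : ∀ j s t, 0 ≤ Q j s t)
    (ω : Fin (T + 1) → S) : 0 ≤ pathWeight init Q ω :=
  mul_nonneg (hinit _) (prod_nonneg fun _ _ => hQ _ _ _)

theorem pathWeight_ne_zero_mono [CommSemiring R] [NoZeroDivisors R] {init : S → R}
    {P Q : Fin T → S → S → R} (hPQ : ∀ j s t, P j s t ≠ 0 → Q j s t ≠ 0) {ω : Fin (T + 1) → S}
    (hω : pathWeight init P ω ≠ 0) : pathWeight init Q ω ≠ 0 := by
  have : Nontrivial R := nontrivial_of_ne _ _ hω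
  exact mul_ne_zero (left_ne_zero_of_mul hω) <| prod_ne_zero_iff.2 fun j hj =>
    hPQ _ _ _ (prod_ne_zero_iff.1 (right_ne_zero_of_mul hω) j hj)

variable [Fintype S]

theorem sum_pathWeight_mul_succ [CommSemiring R] (init : S → R) (Q : Fin (T + 1) → S → S → R)
    (F : (Fin (T + 2) → S) → R) :
    ∑ ω, pathWeight init Q ω * F ω
      = ∑ ω, pathWeight init (fun j => Q j.succ) ω * ∑ z, Q 0 (ω 0) z * F (Fin.cons z ω) := by
  rw [← (Fin.consEquiv fun _ => S).sum_comp, Fintype.sum_prod_type_right]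
  refine sum_congr rfl fun ω _ => ?_
  rw [mul_sum]
  refine sum_congr rfl fun z _ => ?_
  change pathWeight init Q (Fin.cons z ω : Fin (T + 2) → S) * F (Fin.cons z ω) = _
  rw [pathWeight_cons, mul_assoc]

theorem sum_pathWeight [CommSemiring R] (init : S → R) {Q : Fin T → S → S → R}
    (hQ : ∀ j s, ∑ t, Q j s t = 1) : ∑ ω, pathWeight init Q ω = ∑ s, init s := by
  induction T with
  | zero => simp [pathWeight, ← (Equiv.funUnique (Fin 1) S).symm.sum_comp]
  | succ T ih =>
    have peel := sum_pathWeight_mul_succ init Q fun _ => 1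
    simp only [mul_one, hQ] at peel
    rw [peel, ih fun j s => hQ j.succ s]

theorem sum_pathWeight_mul_step [CommSemiring R] (init : S → R) {Q : Fin T → S → S → R}
    (hQ : ∀ j s, ∑ t, Q j s t = 1) (i : Fin T) (g : S → S → R) :
    ∑ ω, pathWeight init Q ω * g (ω i.succ) (ω i.castSucc)
      = ∑ ω, pathWeight init Q ω * ∑ t, Q i (ω i.succ) t * g (ω i.succ) t := by
  induction T with
  | zero => exact i.elim0
  | succ T ih =>
    simp only [sum_pathWeight_mul_succ]
    cases i using Fin.cases with
    | zero =>
      simp only [Fin.castSucc_zero, Fin.cons_succ, Fin.cons_zero, ← sum_mul, hQ, one_mul]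
    | succ i =>
      simp only [← Fin.succ_castSucc, Fin.cons_succ, ← sum_mul, hQ, one_mul]
      exact ih (fun j s => hQ j.succ s) i

theorem relEntropy_pathWeight_mul (init : S → ℝ) {P Q : Fin T → S → S → ℝ}
    (hP : ∀ j s, ∑ t, P j s t = 1) (hPQ : ∀ j s t, P j s t ≠ 0 → Q j s t ≠ 0)
    {f : (Fin (T + 1) → S) → ℝ} (hf : ∀ ω, pathWeight init P ω ≠ 0 → f ω ≠ 0) :
    relEntropy (pathWeight init P) (fun ω => pathWeight init Q ω * f ω)
      = (∑ j, ∑ ω, pathWeight init P ω * relEntropy (P j (ω j.succ)) (Q j (ω j.succ)))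
        - ∑ ω, pathWeight init P ω * Real.log (f ω) := by
  have term_eq (ω : Fin (T + 1) → S) :
      pathWeight init P ω * Real.log (pathWeight init P ω / (pathWeight init Q ω * f ω))
        = (∑ j, pathWeight init P ω
            * Real.log (P j (ω j.succ) (ω j.castSucc) / Q j (ω j.succ) (ω j.castSucc)))
          - pathWeight init P ω * Real.log (f ω) := by
    by_cases hω : pathWeight init P ω = 0
    · simp [hω]
    · have hPω := fun j => prod_ne_zero_iff.1 (right_ne_zero_of_mul hω) j (mem_univ j)
      have ratio_eq : pathWeight init P ω / pathWeight init Q ω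
          = ∏ j, P j (ω j.succ) (ω j.castSucc) / Q j (ω j.succ) (ω j.castSucc) := by
        rw [pathWeight, pathWeight, mul_div_mul_left _ _ (left_ne_zero_of_mul hω),
          prod_div_distrib]
      rw [← div_div,
        Real.log_div (div_ne_zero hω (pathWeight_ne_zero_mono hPQ hω)) (hf ω hω), ratio_eq,
        Real.log_prod fun j _ => div_ne_zero (hPω j) (hPQ _ _ _ (hPω j)), mul_sub, mul_sum]
  simp only [relEntropy, term_eq, sum_sub_distrib]
  rw [sum_comm]
  congr 1
  exact sum_congr rfl fun j _ =>
    sum_pathWeight_mul_step init hP j fun s t => Real.log (P j s t / Q j s t)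

theorem neg_log_sum_pathWeight_mul_le {init : S → ℝ} (hinit : 0 ≤ init)
    (hinit_sum : ∑ s, init s = 1) {P Q : Fin T → S → S → ℝ} (hP : ∀ j s t, 0 ≤ P j s t)
    (hP_sum : ∀ j s, ∑ t, P j s t = 1) (hQ : ∀ j s t, 0 ≤ Q j s t)
    (hPQ : ∀ j s t, P j s t ≠ 0 → Q j s t ≠ 0) {f : (Fin (T + 1) → S) → ℝ} (hf : ∀ ω, 0 ≤ f ω)
    (hf_ne : ∀ ω, pathWeight init P ω ≠ 0 → f ω ≠ 0) :
    -Real.log (∑ ω, pathWeight init Q ω * f ω)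
      ≤ (∑ j, ∑ ω, pathWeight init P ω * relEntropy (P j (ω j.succ)) (Q j (ω j.succ)))
        - ∑ ω, pathWeight init P ω * Real.log (f ω) := by
  rw [← relEntropy_pathWeight_mul init hP_sum hPQ hf_ne]
  exact neg_log_sum_le_relEntropy (pathWeight_nonneg hinit hP)
    ((sum_pathWeight init hP_sum).trans hinit_sum)
    (fun ω => mul_nonneg (pathWeight_nonneg hinit hQ ω) (hf ω))
    fun ω hω => mul_ne_zero (pathWeight_ne_zero_mono hPQ hω) (hf_ne ω hω)

end PathWeight

section UnmaskKernel

variable {K : Type*} [DecidableEq K] {b : ℝ}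

/-- The reverse transition of masked diffusion at a single position, from `u` to `v`, where
`Sum.inr ()` is the mask: a revealed token stays, and a mask is replaced with probability `b` by a
token drawn from `p`. -/
def unmaskKernel (b : ℝ) (p : K → ℝ) (u v : K ⊕ Unit) : ℝ :=
  if u = Sum.inr () then Sum.elim (fun k => b * p k) (fun _ => 1 - b) v
  else if v = u then 1 else 0

theorem unmaskKernel_nonneg (hb : b ∈ Set.Icc 0 1) {p : K → ℝ} (hp : 0 ≤ p)
    (u v : K ⊕ Unit) : 0 ≤ unmaskKernel b p u v := by
  unfold unmaskKernel
  split_ifs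
  · rcases v with k | _
    · exact mul_nonneg hb.1 (hp k)
    · exact sub_nonneg.2 hb.2
  · exact zero_le_one
  · exact le_rfl

theorem unmaskKernel_ne_zero_mono {p r : K → ℝ} (hpr : ∀ k, p k ≠ 0 → r k ≠ 0) {u v : K ⊕ Unit}
    (h : unmaskKernel b p u v ≠ 0) : unmaskKernel b r u v ≠ 0 := by
  unfold unmaskKernel at h ⊢
  split_ifs at h ⊢
  · rcases v with k | _
    · exact mul_ne_zero (left_ne_zero_of_mul h) (hpr k (right_ne_zero_of_mul h))
    · exact h
  · exact h
  · exact h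

variable [Fintype K]

theorem sum_unmaskKernel (b : ℝ) {p : K → ℝ} (hp : ∑ k, p k = 1) (u : K ⊕ Unit) :
    ∑ v, unmaskKernel b p u v = 1 := by
  by_cases hu : u = Sum.inr ()
  · simp [unmaskKernel, hu, ← mul_sum, hp]
  · simp only [unmaskKernel, if_neg hu, sum_ite_eq', mem_univ, if_true]

theorem relEntropy_unmaskKernel (b : ℝ) (p r : K → ℝ) (u : K ⊕ Unit) :
    relEntropy (unmaskKernel b p u) (unmaskKernel b r u)
      = if u = Sum.inr () then b * relEntropy p r else 0 := by
  by_cases hu : u = Sum.inr ()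
  · have reveal_eq (k : K) : b * p k * Real.log (b * p k / (b * r k))
        = b * (p k * Real.log (p k / r k)) := by
      by_cases hb : b = 0
      · simp [hb]
      · rw [mul_div_mul_left _ _ hb, mul_assoc]
    simp [relEntropy, unmaskKernel, hu, reveal_eq, mul_sum]
  · simp [relEntropy, unmaskKernel, hu]

end UnmaskKernel

section SeqUnmaskKernel

variable {ι K : Type*} [Fintype ι] [DecidableEq K] {b : ℝ}

/-- The reverse transition of masked diffusion on sequences, with positions moving independently;
the token revealed at position `l` is drawn from `p l`. -/
def seqUnmaskKernel (b : ℝ) (p : ι → K → ℝ) (s t : ι → K ⊕ Unit) : ℝ :=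
  ∏ l, unmaskKernel b (p l) (s l) (t l)

theorem seqUnmaskKernel_nonneg (hb : b ∈ Set.Icc 0 1) {p : ι → K → ℝ} (hp : ∀ l, 0 ≤ p l)
    (s t : ι → K ⊕ Unit) : 0 ≤ seqUnmaskKernel b p s t :=
  prod_nonneg fun l _ => unmaskKernel_nonneg hb (hp l) _ _

theorem seqUnmaskKernel_ne_zero_mono {p r : ι → K → ℝ} (hpr : ∀ l k, p l k ≠ 0 → r l k ≠ 0)
    {s t : ι → K ⊕ Unit} (h : seqUnmaskKernel b p s t ≠ 0) : seqUnmaskKernel b r s t ≠ 0 :=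
  prod_ne_zero_iff.2 fun l hl => unmaskKernel_ne_zero_mono (hpr l) (prod_ne_zero_iff.1 h l hl)

variable [DecidableEq ι] [Fintype K]

theorem sum_seqUnmaskKernel (b : ℝ) {p : ι → K → ℝ} (hp : ∀ l, ∑ k, p l k = 1)
    (s : ι → K ⊕ Unit) : ∑ t, seqUnmaskKernel b p s t = 1 := by
  simp only [seqUnmaskKernel, ← Fintype.prod_sum, sum_unmaskKernel b (hp _), prod_const_one]

theorem relEntropy_seqUnmaskKernel (b : ℝ) {p r : ι → K → ℝ} (hp : ∀ l, ∑ k, p l k = 1)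
    (hpr : ∀ l k, p l k ≠ 0 → r l k ≠ 0) (s : ι → K ⊕ Unit) :
    relEntropy (seqUnmaskKernel b p s) (seqUnmaskKernel b r s)
      = b * ∑ l, relEntropy (p l) (r l) * (if s l = Sum.inr () then 1 else 0) := by
  calc relEntropy (seqUnmaskKernel b p s) (seqUnmaskKernel b r s)
      = ∑ l, relEntropy (unmaskKernel b (p l) (s l)) (unmaskKernel b (r l) (s l)) :=
        relEntropy_pi (fun l => sum_unmaskKernel b (hp l) (s l))
          fun l _ => unmaskKernel_ne_zero_mono (hpr l)
    _ = b * ∑ l, relEntropy (p l) (r l) * (if s l = Sum.inr () then 1 else 0) := by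
        simp only [relEntropy_unmaskKernel, mul_sum, mul_ite, mul_one, mul_zero]

end SeqUnmaskKernel

theorem sub_div_one_sub_mem_Icc {s t : ℝ} (hs : s < 1) (hst : s ≤ t) (ht : t ≤ 1) :
    (t - s) / (1 - s) ∈ Set.Icc 0 1 :=
  ⟨div_nonneg (sub_nonneg.2 hst) (sub_nonneg.2 hs.le),
    (div_le_one (sub_pos.2 hs)).2 (sub_le_sub_right ht s)⟩

theorem stmt_8_general {ι K : Type*} [Fintype ι] [DecidableEq ι] [Fintype K] [DecidableEq K]
    {T : ℕ} (x : ι → K) {β : Fin T → ℝ} (hβ : ∀ j, β j ∈ Set.Icc 0 1)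
    {init : (ι → K ⊕ Unit) → ℝ} (hinit : 0 ≤ init) (hinit_sum : ∑ s, init s = 1)
    {q : (Fin (T + 1) → ι → K ⊕ Unit) → ℝ}
    (hq : q = pathWeight init fun j => seqUnmaskKernel (β j) fun l => Pi.single (x l) 1)
    {xφ : (ι → K ⊕ Unit) → ι → K → ℝ} (hxφ : ∀ z l, 0 ≤ xφ z l)
    (hxφ_pos : ∀ z l, 0 < xφ z l (x l))
    {w : (ι → K ⊕ Unit) → ℝ} (hw : ∀ z, 0 < w z)
    {pdec : (ι → K ⊕ Unit) → ℝ} (hpdec : ∀ z, 0 ≤ pdec z)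
    (hpdec_pos : ∀ ω, 0 < q ω → 0 < pdec (ω 0)) :
    -Real.log (∑ ω, pathWeight init (fun j s t => seqUnmaskKernel (β j) (xφ s) s t * w s) ω
        * pdec (ω 0))
      ≤ (∑ ω, q ω * -Real.log (pdec (ω 0)))
        + (∑ j : Fin T, ∑ ω, q ω * (β j * ∑ l, -Real.log (xφ (ω j.succ) l (x l))
            * (if ω j.succ l = Sum.inr () then 1 else 0)))
        - ∑ j : Fin T, ∑ ω, q ω * Real.log (w (ω j.succ)) := by
  subst hq
  set q := pathWeight init fun j => seqUnmaskKernel (β j) fun l => Pi.single (x l) 1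
  have hsingle (l) : (0 : K → ℝ) ≤ Pi.single (x l) 1 := Pi.single_nonneg.2 zero_le_one
  have hsingle_sum (l) : ∑ k, (Pi.single (x l) 1 : K → ℝ) k = 1 := by simp
  have hsingle_ac (z l k) (hk : (Pi.single (x l) 1 : K → ℝ) k ≠ 0) : xφ z l k ≠ 0 := by
    rw [Pi.single_apply, ite_ne_right_iff] at hk
    exact hk.1 ▸ (hxφ_pos z l).ne'
  have hq_nonneg (ω) : 0 ≤ q ω :=
    pathWeight_nonneg hinit (fun j => seqUnmaskKernel_nonneg (hβ j) hsingle) ω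
  have elbo := neg_log_sum_pathWeight_mul_le hinit hinit_sum
    (fun j => seqUnmaskKernel_nonneg (hβ j) hsingle)
    (fun j => sum_seqUnmaskKernel (β j) hsingle_sum)
    (fun j s t => mul_nonneg (seqUnmaskKernel_nonneg (hβ j) (hxφ s) s t) (hw s).le)
    (fun j s t h => mul_ne_zero (seqUnmaskKernel_ne_zero_mono (hsingle_ac s) h) (hw s).ne')
    (fun ω => hpdec (ω 0))
    (fun ω h => (hpdec_pos ω ((hq_nonneg ω).lt_of_ne' h)).ne')
  have step_relEntropy (j : Fin T) (s : ι → K ⊕ Unit) :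
      relEntropy (seqUnmaskKernel (β j) (fun l => Pi.single (x l) 1) s)
          (fun t => seqUnmaskKernel (β j) (xφ s) s t * w s)
        = β j * (∑ l, -Real.log (xφ s l (x l)) * (if s l = Sum.inr () then 1 else 0))
          - Real.log (w s) := by
    rw [relEntropy_mul_const (sum_seqUnmaskKernel (β j) hsingle_sum s)
      (fun t => seqUnmaskKernel_ne_zero_mono (hsingle_ac s)) (hw s).ne',
      relEntropy_seqUnmaskKernel (β j) hsingle_sum (hsingle_ac s)]
    simp only [relEntropy_single_one]
  simp only [step_relEntropy, mul_sub, sum_sub_distrib] at elbo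
  simp only [mul_neg, sum_neg_distrib]
  linarith

/-- Theorem 1: Discrete Diffusion Posterior Sampling, DDPS.
Masked (absorbing) discrete diffusion over sequences of `L` tokens with `T` reverse
steps.  `K` is a finite token alphabet, `V = K ⊕ Unit` with mask `m = Sum.inr ()`,
`x : Fin L → K` the data.  The noise schedule `a : Fin (T+1) → ℝ` is antitone with
`a 0 ≤ 1`, `a T = 0`, `a i < 1` for `i ≥ 1`, and `β j = (a j - a (j+1)) / (1 - a (j+1))`
for the reverse step from time `j+1` to time `j` (so `ω j.succ` plays the role of the
paper's conditioning state `Z_{t(i)}` and `ω j.castSucc` that of `Z_{s(i)}`).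
`qpath` is the law of the backward chain: `Z_T` is the all-mask sequence and, given
`Z_i`, the coordinates of `Z_{i-1}` are independent, fixing revealed coordinates and at
masked coordinates revealing `x l` with probability `β` and staying masked otherwise.
`xφ` is the adapted probability table, `w` the measurement-likelihood tilt weights
(`w z = q(y | xφ(z))`, with `0 < w z ≤ 1`), `pdec` the decoder probability
`p_φ(x | z_0)`, and `pφxy = p_φ(x | y)` the tilted reverse path mass of `x`.  Then
`-log p_φ(x|y) ≤ E_q[-log pdec(Z_0)]
  + ∑_i E_q[β_i ∑_l (-log xφ(Z_i)^l(x^l)) 1{Z_i^l = m}] - ∑_i E_q[log w(Z_i)]`. -/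
theorem stmt_8 {K : Type*} [Fintype K] [DecidableEq K]
    (L T : ℕ) (hL : 1 ≤ L) (hT : 1 ≤ T)
    (x : Fin L → K)
    (a : Fin (T + 1) → ℝ) (ha_anti : Antitone a)
    (ha0 : a 0 ≤ 1) (ha_last : a (Fin.last T) = 0)
    (ha_lt : ∀ i : Fin (T + 1), 1 ≤ (i : ℕ) → a i < 1)
    (β : Fin T → ℝ) (hβ : ∀ j, β j = (a j.castSucc - a j.succ) / (1 - a j.succ))
    (Qker : Fin T → (Fin L → K ⊕ Unit) → (Fin L → K ⊕ Unit) → ℝ)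
    (hQker : ∀ j zhi zlo, Qker j zhi zlo = ∏ l, if zhi l = Sum.inr ()
        then Sum.elim (fun k => if k = x l then β j else 0) (fun _ => 1 - β j) (zlo l)
        else if zlo l = zhi l then (1 : ℝ) else 0)
    (qpath : (Fin (T + 1) → Fin L → K ⊕ Unit) → ℝ)
    (hqpath : ∀ ω, qpath ω
      = (if ω (Fin.last T) = (fun _ => Sum.inr ()) then (1 : ℝ) else 0)
        * ∏ j : Fin T, Qker j (ω j.succ) (ω j.castSucc))
    (xφ : (Fin L → K ⊕ Unit) → Fin L → K → ℝ)
    (hxφ_nonneg : ∀ z l k, 0 ≤ xφ z l k) (hxφ_sum : ∀ z l, ∑ k, xφ z l k = 1)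
    (hxφ_pos : ∀ z l, 0 < xφ z l (x l))
    (w : (Fin L → K ⊕ Unit) → ℝ) (hw_pos : ∀ z, 0 < w z) (hw_le : ∀ z, w z ≤ 1)
    (pdec : (Fin L → K ⊕ Unit) → ℝ) (hpdec_nonneg : ∀ z, 0 ≤ pdec z)
    (hpdec_pos : ∀ ω, 0 < qpath ω → 0 < pdec (ω 0))
    (Qφker : Fin T → (Fin L → K ⊕ Unit) → (Fin L → K ⊕ Unit) → ℝ)
    (hQφker : ∀ j zhi zlo, Qφker j zhi zlo = ∏ l, if zhi l = Sum.inr ()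
        then Sum.elim (fun k => β j * xφ zhi l k) (fun _ => 1 - β j) (zlo l)
        else if zlo l = zhi l then (1 : ℝ) else 0)
    (pφxy : ℝ)
    (hpφxy : pφxy = ∑ ω : Fin (T + 1) → Fin L → K ⊕ Unit,
      (if ω (Fin.last T) = (fun _ => Sum.inr ()) then (1 : ℝ) else 0)
        * (∏ j : Fin T, Qφker j (ω j.succ) (ω j.castSucc) * w (ω j.succ))
        * pdec (ω 0)) :
    -Real.log pφxy
      ≤ (∑ ω : Fin (T + 1) → Fin L → K ⊕ Unit, qpath ω * (-Real.log (pdec (ω 0))))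
        + (∑ j : Fin T, ∑ ω : Fin (T + 1) → Fin L → K ⊕ Unit,
            qpath ω * (β j * ∑ l, (-Real.log (xφ (ω j.succ) l (x l)))
              * (if ω j.succ l = Sum.inr () then (1 : ℝ) else 0)))
        - ∑ j : Fin T, ∑ ω : Fin (T + 1) → Fin L → K ⊕ Unit,
            qpath ω * Real.log (w (ω j.succ)) := by
  have hβ_mem (j : Fin T) : β j ∈ Set.Icc 0 1 := hβ j ▸ sub_div_one_sub_mem_Icc
    (ha_lt _ (by simp)) (ha_anti j.castSucc_le_succ) ((ha_anti (Fin.zero_le _)).trans ha0)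
  have hq : qpath = pathWeight (Pi.single (fun _ => Sum.inr ()) 1) fun j =>
      seqUnmaskKernel (β j) fun l => Pi.single (x l) 1 := by
    ext ω
    simp only [hqpath, hQker, pathWeight, seqUnmaskKernel, unmaskKernel, Pi.single_apply, mul_ite,
      mul_one, mul_zero]
  simpa only [hpφxy, pathWeight, seqUnmaskKernel, unmaskKernel, hQφker, Pi.single_apply] using
    stmt_8_general x hβ_mem (Pi.single_nonneg.2 zero_le_one) (by simp) hq hxφ_nonneg hxφ_pos hw_pos
      hpdec_nonneg hpdec_pos
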